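/- Let K be a finite field of characteristic 2, and let B, C ∈ K[X] be nonzero polynomials such that B is monic of degree at least 2, every irreducible factor of B divides C exactly once (i.e., every prime factor of B is a simple prime factor of C), and deg C < 2·deg B. Let R := K[x][y] = K[X,Y]/(Y² + B(X)Y + C(X)), regarded as a module over K[x]. Then R is generated by its units as a K[x]-module if and only if there exist μ ∈ K, μ ≠ 0, and a polynomial a ∈ K[X] such that a² + B·a + C = μ (i.e., the polynomial Y² + B(x)Y + C(x) + μ has a root in K[x]). -/

import Mathlib

/-!
Write `ω` for the class of `Y`. Since `deg C < 2 deg B`, the infinite place of the rational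
function field splits: one root of `Y² + BY + C` has degree `deg B` there, the other a smaller one.
A unit with nonzero `ω`-coefficient, or else its inverse, is larger at the place where `ω` is small
than at the place where `ω` is large, and its degree at the former is then `deg B` plus that of its
`ω`-coefficient. Dividing repeatedly by such a unit `ε` whose `ω`-coefficient `g` has least degree
shows that all units lie in the order of conductor `g`. If the units span, this order is the whole
ring, so `g` is a unit and `g⁻¹ε` has the form `ω - a`; its norm is `a² + Ba + C`.
-/

open Polynomial QuadraticAlgebra

section CommRing

variable {A : Type*} [CommRing A] {a b : A}

/-- The order `A + dAω` of conductor `d` in the quadratic algebra `A[ω]`. -/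
def conductorOrder (a b d : A) : Subalgebra A (QuadraticAlgebra A a b) where
  carrier := {z | d ∣ z.im}
  mul_mem' {z w} hz hw := by
    rw [Set.mem_ofPred_eq, im_mul]
    exact dvd_add (dvd_add (hw.mul_left _) (hz.mul_right _)) (hw.mul_left _)
  add_mem' {z w} hz hw := by
    rw [Set.mem_ofPred_eq, im_add]
    exact dvd_add hz hw
  algebraMap_mem' _ := by simp

theorem mem_conductorOrder {d : A} {z : QuadraticAlgebra A a b} :
    z ∈ conductorOrder a b d ↔ d ∣ z.im := Iff.rfl

theorem isUnit_of_forall_units_mem_conductorOrder {d : A}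
    (hspan : Submodule.span A {u : QuadraticAlgebra A a b | IsUnit u} = ⊤)
    (hd : ∀ u : (QuadraticAlgebra A a b)ˣ, u.val ∈ conductorOrder a b d) : IsUnit d := by
  have htop : ⊤ ≤ (conductorOrder a b d).toSubmodule := by
    rw [← hspan, Submodule.span_le]
    rintro _ ⟨u, rfl⟩
    exact hd u
  have hω : d ∣ (ω : QuadraticAlgebra A a b).im := htop Submodule.mem_top
  exact isUnit_of_dvd_one (omega_im (R := A) ▸ hω)

theorem span_units_eq_top_of_isUnit_norm_mk_one {x : A}
    (hx : IsUnit (norm (⟨x, 1⟩ : QuadraticAlgebra A a b))) :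
    Submodule.span A {u : QuadraticAlgebra A a b | IsUnit u} = ⊤ := by
  refine Submodule.eq_top_iff'.mpr fun z => ?_
  have hz : z = (z.re - z.im * x) • (1 : QuadraticAlgebra A a b) + z.im • ⟨x, 1⟩ := by
    ext <;> simp
  rw [hz]
  exact add_mem (Submodule.smul_mem _ _ (Submodule.subset_span isUnit_one))
    (Submodule.smul_mem _ _ (Submodule.subset_span (isUnit_iff_norm_isUnit.mpr hx)))

theorem star_units_eq_norm_smul_inv (u : (QuadraticAlgebra A a b)ˣ) :
    star u.val = u.val.norm • u⁻¹.val := by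
  rw [Algebra.smul_def, algebraMap_norm_eq_mul_star, mul_comm, Units.inv_mul_cancel_left]

theorem units_mem_conductorOrder_of_inv_mem {d : A} {u : (QuadraticAlgebra A a b)ˣ}
    (hu : u⁻¹.val ∈ conductorOrder a b d) : u.val ∈ conductorOrder a b d := by
  have hstar := (conductorOrder a b d).smul_mem hu u.val.norm
  rw [← star_units_eq_norm_smul_inv] at hstar
  simpa [mem_conductorOrder] using hstar

/-- The presentation `A[Y]/(Y² + βY + γ)` of the quadratic algebra in which `ω² = -γ - βω`. -/
noncomputable def adjoinRootEquivQuadraticAlgebra (β γ : A) :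
    AdjoinRoot ((X : A[X]) ^ 2 + C β * X + C γ) ≃ₐ[A] QuadraticAlgebra A (-γ) (-β) :=
  AlgEquiv.ofAlgHom
    (AdjoinRoot.liftAlgHom _ (Algebra.ofId _ _) ω (by
      simp only [eval₂_add, eval₂_mul, eval₂_pow, eval₂_X, eval₂_C]
      ext <;> simp [pow_two]))
    (QuadraticAlgebra.lift ⟨AdjoinRoot.root _, by
      have hroot := AdjoinRoot.eval₂_root ((X : A[X]) ^ 2 + C β * X + C γ)
      simp only [eval₂_add, eval₂_mul, eval₂_pow, eval₂_X, eval₂_C] at hroot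
      simp only [Algebra.smul_def, AdjoinRoot.algebraMap_eq, map_neg]
      linear_combination hroot⟩)
    (by ext <;> simp)
    (by ext; simp)

end CommRing

theorem span_units_eq_top_iff_of_algEquiv {A S T : Type*} [CommSemiring A] [Semiring S]
    [Semiring T] [Algebra A S] [Algebra A T] (e : S ≃ₐ[A] T) :
    Submodule.span A {u : S | IsUnit u} = ⊤ ↔ Submodule.span A {u : T | IsUnit u} = ⊤ := by
  have himage : e.toLinearEquiv '' {u | IsUnit u} = {u : T | IsUnit u} := by
    ext t
    refine ⟨?_, fun ht => ⟨e.symm t, ht.map e.symm, e.apply_symm_apply t⟩⟩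
    rintro ⟨u, hu, rfl⟩
    exact IsUnit.map e hu
  rw [← himage, Submodule.span_image_linearEquiv, Submodule.map_eq_top_iff]

section Polynomial

variable {R : Type*} [CommRing R] {a b : R[X]}

/-- An element of `R[X][ω]` is dominant if its rational part has larger degree than that of its
conjugate. When `deg a < 2 deg b`, the dominant units are those that are larger at the infinite
place where `deg ω < deg b` than at the one where `deg ω = deg b`. -/
def IsDominant (z : QuadraticAlgebra R[X] a b) : Prop :=
  (star z).re.degree < z.re.degree

namespace IsDominant

variable {z w : QuadraticAlgebra R[X] a b}

theorem degree_mul_im (hz : IsDominant z) : (b * z.im).degree = z.re.degree := by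
  rw [← degree_sub_eq_right_of_degree_lt hz, re_star, add_sub_cancel_left]

theorem im_ne_zero (hz : IsDominant z) : z.im ≠ 0 := by
  intro him
  simp [IsDominant, him] at hz

theorem degree_im_mul [IsDomain R] (hz : IsDominant z) (hw : IsDominant w) :
    (z * w).im.degree = (b * z.im * w.im).degree := by
  have him : (z * w).im = z.re * w.im + z.im * (star w).re := by
    rw [im_mul, re_star]
    ring
  have hre : (z.re * w.im).degree = (b * z.im * w.im).degree := by
    rw [degree_mul, ← hz.degree_mul_im, ← degree_mul]
  have hlt : (z.im * (star w).re).degree < (z.re * w.im).degree := calc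
    _ = z.im.degree + (star w).re.degree := degree_mul
    _ < z.im.degree + w.re.degree :=
      WithBot.add_lt_add_left (degree_ne_bot.mpr hz.im_ne_zero) hw
    _ = (z.im * (b * w.im)).degree := by rw [degree_mul, hw.degree_mul_im]
    _ = (z.re * w.im).degree := by rw [hre, mul_assoc, mul_left_comm]
  rw [him, degree_add_eq_left_of_degree_lt hlt, hre]

theorem natDegree_im_lt_natDegree_im_mul [IsDomain R] (hb : 0 < b.natDegree)
    (hz : IsDominant z) (hw : IsDominant w) : z.im.natDegree < (z * w).im.natDegree := by
  have hbz : b * z.im ≠ 0 := mul_ne_zero (ne_zero_of_natDegree_gt hb) hz.im_ne_zero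
  rw [natDegree_eq_of_degree_eq (hz.degree_im_mul hw), natDegree_mul hbz hw.im_ne_zero,
    natDegree_mul (left_ne_zero_of_mul hbz) hz.im_ne_zero]
  lia

end IsDominant

variable [IsDomain R]

theorem degree_re_star_ne_degree_re_of_isUnit (hab : a.natDegree < 2 * b.natDegree)
    {z : QuadraticAlgebra R[X] a b} (hz : IsUnit z) (him : z.im ≠ 0) :
    (star z).re.degree ≠ z.re.degree := by
  intro hdeg
  have hb : 0 < b.natDegree := by lia
  have hre : (star z).re.natDegree = z.re.natDegree := natDegree_eq_of_degree_eq hdeg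
  have him_le : b.natDegree + z.im.natDegree ≤ z.re.natDegree := calc
    _ = (b * z.im).natDegree := (natDegree_mul (ne_zero_of_natDegree_gt hb) him).symm
    _ = ((star z).re - z.re).natDegree := by rw [re_star, add_sub_cancel_left]
    _ ≤ max (star z).re.natDegree z.re.natDegree := natDegree_sub_le _ _
    _ = z.re.natDegree := by rw [hre, max_self]
  have hmul_le : (z.re * (star z).re).natDegree ≤ a.natDegree + 2 * z.im.natDegree := calc
    _ = (z.norm + a * z.im ^ 2).natDegree := by
      congr 1
      rw [norm_def, re_star]
      ring
    _ ≤ max z.norm.natDegree (a * z.im ^ 2).natDegree := natDegree_add_le _ _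
    _ = (a * z.im ^ 2).natDegree := by
      rw [natDegree_eq_zero_of_isUnit (isUnit_iff_norm_isUnit.mp hz), Nat.zero_max]
    _ ≤ a.natDegree + 2 * z.im.natDegree := by
      rw [← natDegree_pow]
      exact natDegree_mul_le
  have hre_ne : z.re ≠ 0 := ne_zero_of_natDegree_gt (n := 0) (by lia)
  have hstar_ne : (star z).re ≠ 0 := ne_zero_of_natDegree_gt (n := 0) (by lia)
  rw [natDegree_mul hre_ne hstar_ne] at hmul_le
  lia

theorem degree_re_star_units_eq_degree_re_inv (u : (QuadraticAlgebra R[X] a b)ˣ) :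
    (star u.val).re.degree = u⁻¹.val.re.degree := by
  have hnorm : u.val.norm.degree = 0 :=
    degree_eq_zero_of_isUnit (isUnit_iff_norm_isUnit.mp u.isUnit)
  rw [star_units_eq_norm_smul_inv, re_smul, smul_eq_mul, degree_mul, hnorm, zero_add]

theorem isDominant_or_isDominant_inv (hab : a.natDegree < 2 * b.natDegree)
    {u : (QuadraticAlgebra R[X] a b)ˣ} (hu : u.val.im ≠ 0) :
    IsDominant u.val ∨ IsDominant u⁻¹.val := by
  have hne := degree_re_star_ne_degree_re_of_isUnit hab u.isUnit hu
  rw [IsDominant, IsDominant, degree_re_star_units_eq_degree_re_inv u⁻¹, inv_inv]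
  rw [degree_re_star_units_eq_degree_re_inv] at hne ⊢
  exact hne.lt_or_gt

theorem mem_conductorOrder_of_isDominant (hab : a.natDegree < 2 * b.natDegree)
    {ε : (QuadraticAlgebra R[X] a b)ˣ}
    (hε : MinimalFor (fun v : (QuadraticAlgebra R[X] a b)ˣ => IsDominant v.val)
      (fun v => v.val.im.natDegree) ε)
    (u : (QuadraticAlgebra R[X] a b)ˣ) (hu : IsDominant u.val) :
    u.val ∈ conductorOrder a b ε.val.im := by
  have hb : 0 < b.natDegree := by lia
  induction hn : u.val.im.natDegree using Nat.strong_induction_on generalizing u with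
  | _ n ih =>
    obtain ⟨v, rfl⟩ : ∃ v, u = v * ε := ⟨u * ε⁻¹, (inv_mul_cancel_right u ε).symm⟩
    suffices hv : v.val ∈ conductorOrder a b ε.val.im by
      have hε_mem : ε.val ∈ conductorOrder a b ε.val.im := mem_conductorOrder.mpr dvd_rfl
      exact Units.val_mul v ε ▸ mul_mem hv hε_mem
    by_cases him : v.val.im = 0
    · exact mem_conductorOrder.mpr (him ▸ dvd_zero _)
    rcases isDominant_or_isDominant_inv hab him with hv | hv_inv
    · exact ih _ (hn ▸ hv.natDegree_im_lt_natDegree_im_mul hb hε.prop) v hv rfl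
    · have hlt := hu.natDegree_im_lt_natDegree_im_mul hb hv_inv
      rw [← Units.val_mul, mul_inv_cancel_comm] at hlt
      exact absurd hlt (hε.not_lt hu)

theorem exists_forall_units_mem_conductorOrder (hab : a.natDegree < 2 * b.natDegree) :
    ∃ ε : (QuadraticAlgebra R[X] a b)ˣ, ∀ u : (QuadraticAlgebra R[X] a b)ˣ,
      u.val ∈ conductorOrder a b ε.val.im := by
  suffices hdom : ∃ ε : (QuadraticAlgebra R[X] a b)ˣ, ∀ u : (QuadraticAlgebra R[X] a b)ˣ,
      IsDominant u.val → u.val ∈ conductorOrder a b ε.val.im by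
    refine hdom.imp fun ε hε u => ?_
    by_cases him : u.val.im = 0
    · exact mem_conductorOrder.mpr (him ▸ dvd_zero _)
    exact (isDominant_or_isDominant_inv hab him).elim (hε u)
      fun hu => units_mem_conductorOrder_of_inv_mem (hε u⁻¹ hu)
  by_cases hex : ∃ u : (QuadraticAlgebra R[X] a b)ˣ, IsDominant u.val
  · obtain ⟨ε, hε⟩ := exists_minimalFor_of_wellFoundedLT _
      (fun u : (QuadraticAlgebra R[X] a b)ˣ => u.val.im.natDegree) hex
    exact ⟨ε, mem_conductorOrder_of_isDominant hab hε⟩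
  · exact ⟨1, fun u hu => absurd ⟨u, hu⟩ hex⟩

theorem span_units_eq_top_iff_exists_isUnit_norm_mk_one (hab : a.natDegree < 2 * b.natDegree) :
    Submodule.span R[X] {u : QuadraticAlgebra R[X] a b | IsUnit u} = ⊤ ↔
      ∃ x, IsUnit (⟨x, 1⟩ : QuadraticAlgebra R[X] a b).norm := by
  refine ⟨fun hspan => ?_, fun ⟨_, hx⟩ => span_units_eq_top_of_isUnit_norm_mk_one hx⟩
  obtain ⟨ε, hε⟩ := exists_forall_units_mem_conductorOrder hab
  obtain ⟨k, hk⟩ := isUnit_of_forall_units_mem_conductorOrder hspan hε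
  have hmk : (⟨k⁻¹.val * ε.val.re, 1⟩ : QuadraticAlgebra R[X] a b) = k⁻¹.val • ε.val := by
    ext <;> simp [← hk]
  refine ⟨k⁻¹.val * ε.val.re, isUnit_iff_norm_isUnit.mp ?_⟩
  rw [hmk]
  exact ε.isUnit.smul k⁻¹

end Polynomial

theorem generated_by_units_iff_char_two_general {R : Type*} [CommRing R] [IsDomain R]
    (B C : R[X]) (hdeg : C.natDegree < 2 * B.natDegree) :
    Submodule.span R[X]
        {u : AdjoinRoot ((X : R[X][X]) ^ 2 + Polynomial.C B * X + Polynomial.C C) | IsUnit u} = ⊤ ↔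
      ∃ (μ : R) (a : R[X]), IsUnit μ ∧ a ^ 2 + B * a + C = Polynomial.C μ := by
  have hnorm (a : R[X]) :
      (⟨-a, 1⟩ : QuadraticAlgebra R[X] (-C) (-B)).norm = a ^ 2 + B * a + C := by
    rw [norm_def]
    ring
  rw [span_units_eq_top_iff_of_algEquiv (adjoinRootEquivQuadraticAlgebra B C),
    span_units_eq_top_iff_exists_isUnit_norm_mk_one (by simpa only [natDegree_neg] using hdeg),
    neg_surjective.exists, exists_comm]
  simp only [hnorm, Polynomial.isUnit_iff, eq_comm]

/-- For a finite field `K` of characteristic `2` and `B, C ∈ K[X]` as in the (modified)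
Hasse normal form, the ring `R = K[X,Y]/(Y² + B(X)Y + C(X))` is generated by its units as a
`K[x]`-module if and only if `Y² + B(x)Y + C(x) + μ` has a root in `K[x]` for some nonzero
constant `μ`. -/
theorem generated_by_units_iff_char_two
    (K : Type*) [Field K] [Finite K] (hchar : ringChar K = 2)
    (B C : Polynomial K) (hB0 : B ≠ 0) (hC0 : C ≠ 0)
    (hBmonic : B.Monic) (hBdeg : 2 ≤ B.natDegree)
    (hfac : ∀ q : Polynomial K, Irreducible q → q ∣ B → q ∣ C ∧ ¬ q ^ 2 ∣ C)
    (hCdeg : C.natDegree < 2 * B.natDegree) :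
    Submodule.span (Polynomial K)
        {u : AdjoinRoot ((Polynomial.X : Polynomial (Polynomial K)) ^ 2 +
          Polynomial.C B * Polynomial.X + Polynomial.C C) | IsUnit u} = ⊤ ↔
      ∃ (μ : K) (a : Polynomial K), μ ≠ 0 ∧ a ^ 2 + B * a + C = Polynomial.C μ := by
  simpa only [isUnit_iff_ne_zero] using generated_by_units_iff_char_two_general B C hCdeg
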